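/- There exists a constant C > 0 such that for every n ≥ 2, the uniformly-averaged expected convergence time of the cooling process satisfies (1/|W_{2n}|)·Σ_{w ∈ W_{2n}} E[T | w₀ = w] ≤ C·n^{5/2}·ln n. -/

import Mathlib

open scoped BigOperators ENNReal

attribute [local instance] Classical.propDecidable

namespace Cooling

/-- Words over the alphabet `{1,2}`, modeled as lists of booleans:
`true` encodes the letter `1`, `false` encodes the letter `2`. -/
abbrev Word := List Bool

/-- `w` is a configuration of length `2*n`: a word of length `2*n` with as many
occurrences of the letter `1` (`true`) as of the letter `2` (`false`). -/
def IsConfig (n : ℕ) (w : Word) : Prop :=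
  w.length = 2 * n ∧ w.count true = n

/-- The (finite) set `W_{2n}` of all configurations of length `2*n`. -/
def configSet (n : ℕ) : Finset Word :=
  ((Finset.univ : Finset (Fin (2 * n) → Bool)).image List.ofFn).filter
    (fun w => w.count true = n)

/-- The number `E(w)` of mismatches of `w`: positions `i` with `w_i = w_{i+1}`. -/
def mismatches (w : Word) : ℕ :=
  (w.zip w.tail).countP (fun p => p.1 == p.2)

/-- The number `F(w)` of flips performable on `w`: positions `i` with `w_i ≠ w_{i+1}`. -/
def flipCount (w : Word) : ℕ :=
  (w.zip w.tail).countP (fun p => p.1 != p.2)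

/-- The word `w^{(i)}` obtained from `w` by exchanging the letters at positions
`i` and `i+1` (0-indexed). -/
def flip (w : Word) (i : ℕ) : Word :=
  (w.set i (w.getD (i + 1) true)).set (i + 1) (w.getD i true)

/-- A flip is permitted at position `i` if both positions `i` and `i+1` exist and the
corresponding letters are different. -/
def CanFlip (w : Word) (i : ℕ) : Prop :=
  i + 1 < w.length ∧ w.getD i true ≠ w.getD (i + 1) true

/-- The set of positions at which a flip is allowed in the cooling process:
positions of permitted flips which do not increase the number of mismatches. -/
noncomputable def allowedFlips (w : Word) : Finset ℕ :=
  (Finset.range w.length).filter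
    (fun i => CanFlip w i ∧ mismatches (flip w i) ≤ mismatches w)

/-- One step of the cooling process: if `E(w) = 0`, stay at `w`; otherwise, perform
a flip chosen uniformly at random among the flips which do not increase the number
of mismatches. -/
noncomputable def coolStep (w : Word) : PMF Word :=
  if h : mismatches w ≠ 0 ∧ (allowedFlips w).Nonempty then
    (PMF.uniformOfFinset (allowedFlips w) h.2).map (flip w)
  else
    PMF.pure w

/-- The distribution of the cooling process at time `t`, started from `w`. -/
noncomputable def coolDist (w : Word) : ℕ → PMF Word
  | 0 => PMF.pure w
  | t + 1 => (coolDist w t).bind coolStep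

/-- The expected convergence time `E[T | w₀ = w]` of the cooling process started at `w`,
where `T = min {t ≥ 0 : E(w_t) = 0}`.  Since mismatch-free configurations are absorbing,
`E[T] = ∑_{t ≥ 0} P(T > t) = ∑_{t ≥ 0} P(E(w_t) ≠ 0)`. -/
noncomputable def expConvTime (w : Word) : ℝ≥0∞ :=
  ∑' t : ℕ, (coolDist w t).toOuterMeasure {v | mismatches v ≠ 0}

/-- The factor of `w` starting at position `s` (0-indexed) of length `l`. -/
def factor (w : Word) (s l : ℕ) : Word := (w.drop s).take l

/-- The height `|p|₁ - |p|₂` of the length-`s` prefix `p` of `w`. -/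
def height (w : Word) (s : ℕ) : ℤ :=
  ((w.take s).count true : ℤ) - (w.take s).count false

/-- The occurrence `(s, l)` is a positive Dyck factor of `w`. -/
def IsPosDyckAt (w : Word) (s l : ℕ) : Prop :=
  0 < l ∧ s + l ≤ w.length ∧
  (factor w s l).count true = (factor w s l).count false ∧
  (∀ i ≤ l, ((factor w s l).take i).count false ≤ ((factor w s l).take i).count true) ∧
  0 ≤ height w s

/-- The occurrence `(s, l)` is a negative Dyck factor of `w`. -/
def IsNegDyckAt (w : Word) (s l : ℕ) : Prop :=
  0 < l ∧ s + l ≤ w.length ∧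
  (factor w s l).count true = (factor w s l).count false ∧
  (∀ i ≤ l, ((factor w s l).take i).count true ≤ ((factor w s l).take i).count false) ∧
  height w s ≤ 0

/-- The occurrence `(s, l)` is a Dyck factor of `w` (positive or negative). -/
def IsDyckAt (w : Word) (s l : ℕ) : Prop :=
  IsPosDyckAt w s l ∨ IsNegDyckAt w s l

/-- The occurrence `(s, l)` is a maximal Dyck factor of `w`: no Dyck factor of `w`
with the same height contains it (other than itself). -/
def IsMaxDyckAt (w : Word) (s l : ℕ) : Prop :=
  IsDyckAt w s l ∧
  ∀ s' l', IsDyckAt w s' l' → height w s' = height w s → s' ≤ s → s + l ≤ s' + l' →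
    s' = s ∧ l' = l

/-- The set `DF(w)` of (occurrences of) maximal Dyck factors of `w`,
encoded as pairs (starting position, length). -/
noncomputable def DF (w : Word) : Finset (ℕ × ℕ) :=
  ((Finset.range (w.length + 1)) ×ˢ (Finset.range (w.length + 1))).filter
    (fun sl => IsMaxDyckAt w sl.1 sl.2)

/-- The variant `φ_α(w) = ∑_{v ∈ DF(w)} (1 + |v|₁)^α`. -/
noncomputable def phi (α : ℝ) (w : Word) : ℝ :=
  ∑ sl ∈ DF w, (1 + ((factor w sl.1 sl.2).count true : ℝ)) ^ α

/-- The volume `V(w) = (1/2) ∑_{k=1}^{|w|} |h_{k-1}(w) + h_k(w)|`: the area between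
the broken-line representation of `w` and the horizontal axis. -/
noncomputable def volume (w : Word) : ℝ :=
  (1 / 2) * ∑ k ∈ Finset.range w.length, |((height w k + height w (k + 1) : ℤ) : ℝ)|

/-!
The partial sums of a balanced word of length `M` form a bridge with steps `±1`, and a flip
reflects a vertex of this bridge through its two neighbours. The flip is allowed when the vertex is
a local extremum adjacent to a monotone run of length at least two. Charge each component of length
`ℓ` of each level set at a positive level with `ℓ (2 M - (ℓ + 1) / 2)`, a concave function of `ℓ`:
this is `2 M` per step, minus one per interval contained in the component. Pair the valley at which
a long rise starts with the peak at which it ends. Reflecting the valley adds two steps to a level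
set, and they end up in a component longer than the one from which reflecting the peak removes two
steps; by concavity the two changes of the total charge add up to at most `-2`. Descents are
treated by reversing time and negative levels by negating the bridge, and adding `(4 M + 1) E` pays
for the flips that touch two long runs. The resulting function decreases by at least one per step
in expectation, so that `E[T | w₀ = w] ≤ 4 M ∑ₖ |hₖ(w)| + 9 M²` by the Foster–Lyapunov argument.

The letters of a uniform balanced word, read as signs, are exchangeable with sum zero, hence
negatively correlated. Therefore `|hₖ|` is at most `√(2 n)` on average, and `E[T]` is `O(n^{5/2})`.
-/

section

open Finset

/-! ### Intervals contained in a finite set of naturals -/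

section Intervals

variable {S T : Finset ℕ} {M i x y : ℕ} {p : ℕ × ℕ}

/-- The nonempty integer intervals contained in `S`, encoded by their pairs of endpoints. A
component of `S` of length `ℓ` contributes `ℓ (ℓ + 1) / 2` of them. -/
def intervals (S : Finset ℕ) : Finset (ℕ × ℕ) :=
  {p ∈ S ×ˢ S | p.1 ≤ p.2 ∧ Icc p.1 p.2 ⊆ S}

/-- The right endpoints of the intervals contained in `S` that start at `x`. -/
def runFrom (S : Finset ℕ) (x : ℕ) : Finset ℕ :=
  {y ∈ S | (x, y) ∈ intervals S}

/-- The number of intervals contained in `S` that meet `{i, i + 1}`, that is, those destroyed by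
removing `i` and `i + 1` from `S`. -/
def numMeeting (S : Finset ℕ) (i : ℕ) : ℕ :=
  #{p ∈ intervals S | p.1 ≤ i + 1 ∧ i ≤ p.2}

lemma mem_intervals : p ∈ intervals S ↔ p.1 ≤ p.2 ∧ Icc p.1 p.2 ⊆ S := by
  simp only [intervals, mem_filter, mem_product, and_iff_right_iff_imp]
  exact fun h => ⟨h.2 (left_mem_Icc.2 h.1), h.2 (right_mem_Icc.2 h.1)⟩

lemma fst_mem_of_mem_intervals (hp : p ∈ intervals S) : p.1 ∈ S :=
  (mem_product.1 (mem_filter.1 hp).1).1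

lemma snd_mem_of_mem_intervals (hp : p ∈ intervals S) : p.2 ∈ S :=
  (mem_product.1 (mem_filter.1 hp).1).2

lemma intervals_mono (h : S ⊆ T) : intervals S ⊆ intervals T := fun _ hp =>
  mem_intervals.2 ⟨(mem_intervals.1 hp).1, (mem_intervals.1 hp).2.trans h⟩

lemma mk_mem_intervals_of_mem (hx : x ∈ S) :
    (x, y) ∈ intervals S ↔ y = x ∨ (x + 1, y) ∈ intervals S := by
  simp only [mem_intervals]
  constructor
  · rintro ⟨hxy, hS⟩
    exact hxy.eq_or_lt.imp Eq.symm
      fun hlt => ⟨hlt, (Icc_subset_Icc_left (Nat.le_succ x)).trans hS⟩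
  · rintro (rfl | ⟨hxy, hS⟩)
    · simpa using hx
    · refine ⟨by omega, fun z hz => ?_⟩
      rw [mem_Icc] at hz
      rcases hz.1.eq_or_lt with rfl | hlt
      · exact hx
      · exact hS (mem_Icc.2 ⟨hlt, hz.2⟩)

lemma card_intervals_le (S : Finset ℕ) : #(intervals S) ≤ #S * #S :=
  (card_filter_le _ _).trans (card_product S S).le

lemma card_intervals_sdiff_add_numMeeting (S : Finset ℕ) (i : ℕ) :
    #(intervals (S \ {i, i + 1})) + numMeeting S i = #(intervals S) := by
  rw [numMeeting, ← card_filter_add_card_filter_not (s := intervals S)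
    (fun p => p.1 ≤ i + 1 ∧ i ≤ p.2), add_comm]
  congr 2
  ext ⟨x, y⟩
  simp only [mem_intervals, mem_filter, subset_iff, mem_Icc, mem_sdiff, mem_insert,
    mem_singleton]
  constructor
  · rintro ⟨hxy, hS⟩
    refine ⟨⟨hxy, fun z hz => (hS hz).1⟩, fun hmeet => ?_⟩
    rcases le_or_gt x i with hx | hx
    · exact (hS ⟨hx, hmeet.2⟩).2 (Or.inl rfl)
    · exact (hS ⟨le_rfl, hxy⟩).2 (Or.inr (by omega))
  · rintro ⟨⟨hxy, hS⟩, hmeet⟩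
    exact ⟨hxy, fun z hz => ⟨hS hz, by omega⟩⟩

lemma mem_runFrom : y ∈ runFrom S x ↔ (x, y) ∈ intervals S := by
  simp only [runFrom, mem_filter, and_iff_right_iff_imp]
  exact snd_mem_of_mem_intervals

lemma card_runFrom_mono (h : S ⊆ T) (x : ℕ) : #(runFrom S x) ≤ #(runFrom T x) :=
  card_le_card fun _ hy => mem_runFrom.2 (intervals_mono h (mem_runFrom.1 hy))

lemma card_runFrom_le (S : Finset ℕ) (x : ℕ) : #(runFrom S x) ≤ #S :=
  card_filter_le _ _

lemma runFrom_of_notMem (hx : x ∉ S) : runFrom S x = ∅ :=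
  filter_eq_empty_iff.2 fun _ _ hy => hx (fst_mem_of_mem_intervals hy)

lemma runFrom_of_mem (hx : x ∈ S) : runFrom S x = insert x (runFrom S (x + 1)) := by
  ext y
  rw [mem_insert, mem_runFrom, mem_runFrom, mk_mem_intervals_of_mem hx]

lemma card_runFrom_of_mem (hx : x ∈ S) : #(runFrom S x) = #(runFrom S (x + 1)) + 1 := by
  rw [runFrom_of_mem hx, card_insert_of_notMem]
  exact fun hmem => absurd (mem_intervals.1 (mem_runFrom.1 hmem)).1 (Nat.not_succ_le_self x)

lemma card_runFrom_eq_add (hxy : x ≤ y) (h : Ico x y ⊆ S) :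
    #(runFrom S x) = #(runFrom S y) + (y - x) := by
  induction y, hxy using Nat.le_induction with
  | base => simp
  | succ y hxy ih =>
    rw [ih ((Ico_subset_Ico_right y.le_succ).trans h),
      card_runFrom_of_mem (h (mem_Ico.2 ⟨hxy, y.lt_succ_self⟩))]
    omega

lemma card_runFrom_le_succ (S : Finset ℕ) (x : ℕ) :
    #(runFrom S x) ≤ #(runFrom S (x + 1)) + 1 := by
  by_cases hx : x ∈ S
  · exact (card_runFrom_of_mem hx).le
  · simp [runFrom_of_notMem hx]

lemma card_mk_union_mk_succ (A B : Finset ℕ) (i : ℕ) :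
    #({i} ×ˢ A ∪ {i + 1} ×ˢ B) = #A + #B := by
  rw [card_union_of_disjoint, card_product, card_product, card_singleton, card_singleton,
    one_mul, one_mul]
  exact disjoint_product.2 (Or.inl (by simp))

lemma card_runFrom_add_le_numMeeting (S : Finset ℕ) (i : ℕ) :
    #(runFrom S i) + #(runFrom S (i + 1)) ≤ numMeeting S i := by
  rw [← card_mk_union_mk_succ _ _ i]
  refine card_le_card ?_
  rintro ⟨x, y⟩ hxy
  simp only [mem_union, mem_product, mem_singleton, mem_runFrom] at hxy
  rcases hxy with ⟨rfl, hy⟩ | ⟨rfl, hy⟩ <;> have hle := (mem_intervals.1 hy).1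
  · exact mem_filter.2 ⟨hy, Nat.le_succ _, hle⟩
  · exact mem_filter.2 ⟨hy, le_rfl, (Nat.le_succ i).trans hle⟩

lemma numMeeting_le_card_runFrom_add (hi : ∀ x ∈ S, x + 1 ≠ i) :
    numMeeting S i ≤ #(runFrom S i) + #(runFrom S (i + 1)) := by
  rw [← card_mk_union_mk_succ _ _ i]
  refine card_le_card ?_
  rintro ⟨x, y⟩ hxy
  obtain ⟨hS, hle, hge⟩ := mem_filter.1 hxy
  have hix : i ≤ x := by
    by_contra! hlt
    exact hi (i - 1) ((mem_intervals.1 hS).2 (mem_Icc.2 (by dsimp only at *; omega))) (by omega)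
  simp only [mem_union, mem_product, mem_singleton, mem_runFrom]
  rcases hix.eq_or_lt with rfl | hlt
  · exact Or.inl ⟨rfl, hS⟩
  · obtain rfl : x = i + 1 := le_antisymm hle hlt
    exact Or.inr ⟨rfl, hS⟩

lemma numMeeting_le (hi : ∀ x ∈ S, x + 1 ≠ i) :
    numMeeting S i ≤ 2 * #(runFrom S (i + 1)) + 1 := by
  have hmeet := numMeeting_le_card_runFrom_add hi
  have hsucc := card_runFrom_le_succ S i
  omega

lemma le_numMeeting {v p : ℕ} (hvp : v < p) (hTS : T ⊆ S) (hS : Icc v p ⊆ S) :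
    2 * #(runFrom T (p + 1)) + 3 ≤ numMeeting S v := by
  have hrun : ∀ x, v ≤ x → x ≤ p → #(runFrom S x) = #(runFrom S (p + 1)) + (p + 1 - x) :=
    fun x hvx hxp => card_runFrom_eq_add (by omega)
      fun z hz => hS (mem_Icc.2 (by rw [mem_Ico] at hz; omega))
  have hv := hrun v le_rfl hvp.le
  have hv' := hrun (v + 1) v.le_succ hvp
  have hmono := card_runFrom_mono hTS (p + 1)
  have hmeet := card_runFrom_add_le_numMeeting S v
  omega

lemma reflect_mem_intervals (hS : ∀ x ∈ S, x < M) (h : ∀ x ∈ S, M - 1 - x ∈ T)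
    (hp : p ∈ intervals S) : (M - 1 - p.2, M - 1 - p.1) ∈ intervals T := by
  have hlt := hS _ (snd_mem_of_mem_intervals hp)
  obtain ⟨hle, hsub⟩ := mem_intervals.1 hp
  refine mem_intervals.2 ⟨by dsimp only; omega, fun z hz => ?_⟩
  rw [mem_Icc] at hz
  have hmem := h _ (hsub (mem_Icc.2 ⟨by omega, by omega⟩ : M - 1 - z ∈ Icc p.1 p.2))
  rwa [show M - 1 - (M - 1 - z) = z by omega] at hmem

lemma card_intervals_le_of_reflect (hS : ∀ x ∈ S, x < M) (h : ∀ x ∈ S, M - 1 - x ∈ T) :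
    #(intervals S) ≤ #(intervals T) := by
  refine card_le_card_of_injOn (fun p => (M - 1 - p.2, M - 1 - p.1))
    (fun p hp => reflect_mem_intervals hS h hp) fun p hp q hq hpq => ?_
  have hp2 := hS _ (snd_mem_of_mem_intervals hp)
  have hq2 := hS _ (snd_mem_of_mem_intervals hq)
  have hp1 := (mem_intervals.1 hp).1
  have hq1 := (mem_intervals.1 hq).1
  simp only [Prod.mk.injEq] at hpq
  exact Prod.ext (by omega) (by omega)

lemma card_le_of_reflect (hS : ∀ x ∈ S, x < M) (h : ∀ x ∈ S, M - 1 - x ∈ T) : #S ≤ #T := by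
  refine card_le_card_of_injOn (M - 1 - ·) h fun x hx y hy hxy => ?_
  have hx' := hS x hx
  have hy' := hS y hy
  dsimp only at hxy
  omega

end Intervals

/-! ### Walks and the potential -/

section Potential

variable {M i a b x : ℕ} {h g : ℕ → ℤ} {c d : ℤ}

/-- `h` makes steps `±1` up to time `M`: the broken line of a word of length `M`. -/
def IsWalk (M : ℕ) (h : ℕ → ℤ) : Prop :=
  ∀ i < M, h (i + 1) = h i + 1 ∨ h (i + 1) = h i - 1

/-- A walk of length `M` from `0` to `0`: the broken line of a balanced word. -/
structure IsBridge (M : ℕ) (h : ℕ → ℤ) : Prop where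
  isWalk : IsWalk M h
  start : h 0 = 0
  finish : h M = 0

/-- The path obtained by reflecting the vertex `i + 1` through its two neighbours. On broken lines
of words this is the flip at position `i`, whence the shift of the index. -/
def reflectAt (h : ℕ → ℤ) (i : ℕ) : ℕ → ℤ :=
  Function.update h (i + 1) (h i + h (i + 2) - h (i + 1))

/-- The vertex `i + 1` is a strict local maximum. -/
def IsPeak (h : ℕ → ℤ) (i : ℕ) : Prop :=
  h i = h (i + 1) - 1 ∧ h (i + 2) = h (i + 1) - 1

/-- The vertex `i + 1` is a strict local minimum. -/
def IsValley (h : ℕ → ℤ) (i : ℕ) : Prop :=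
  h i = h (i + 1) + 1 ∧ h (i + 2) = h (i + 1) + 1

/-- The monotone run of the walk `h` ending at its local extremum `i + 1` has length at least two;
in terms of words, there is a mismatch just before position `i`. -/
def LongBefore (h : ℕ → ℤ) (i : ℕ) : Prop :=
  i ≠ 0 ∧ h (i - 1) ≠ h (i + 1)

/-- The monotone run starting at the local extremum `i + 1` of the walk `h` of length `M` has
length at least two; in terms of words, there is a mismatch just after position `i`. -/
def LongAfter (M : ℕ) (h : ℕ → ℤ) (i : ℕ) : Prop :=
  i + 2 < M ∧ h (i + 1) ≠ h (i + 3)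

/-- The path `h` makes only steps `+1` between times `a` and `b`. -/
def IsRise (h : ℕ → ℤ) (a b : ℕ) : Prop :=
  ∀ x, a ≤ x → x < b → h (x + 1) = h x + 1

/-- The steps of the path, indexed by their starting times, that reach height `c`. -/
def levelSet (M : ℕ) (h : ℕ → ℤ) (c : ℤ) : Finset ℕ :=
  {x ∈ range M | c ≤ max (h x) (h (x + 1))}

/-- The one-sided potential: each component of length `ℓ` of each level set at a positive level
contributes the concave quantity `ℓ (2 M - (ℓ + 1) / 2)`. -/
noncomputable def potential (M : ℕ) (h : ℕ → ℤ) : ℤ :=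
  ∑ c ∈ Icc (1 : ℤ) M, (2 * M * #(levelSet M h c) - #(intervals (levelSet M h c)))

/-- The change of the potential under the reflection of the vertex `i + 1`. -/
noncomputable def potDiff (M : ℕ) (h : ℕ → ℤ) (i : ℕ) : ℤ :=
  potential M (reflectAt h i) - potential M h

lemma IsWalk.apply_add_two (hw : IsWalk M h) (hi : i + 1 < M) :
    h (i + 2) = h (i + 1) + 1 ∨ h (i + 2) = h (i + 1) - 1 :=
  hw (i + 1) hi

lemma IsWalk.apply_add_three (hw : IsWalk M h) (hi : i + 2 < M) :
    h (i + 3) = h (i + 2) + 1 ∨ h (i + 3) = h (i + 2) - 1 :=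
  hw (i + 2) hi

lemma IsWalk.neg (hw : IsWalk M h) : IsWalk M (-h) := fun i hi => by
  rcases hw i hi with hstep | hstep <;> simp only [Pi.neg_apply, hstep] <;> omega

lemma IsBridge.neg (hb : IsBridge M h) : IsBridge M (-h) :=
  ⟨hb.isWalk.neg, by simp [hb.start], by simp [hb.finish]⟩

lemma IsBridge.apply_le (hb : IsBridge M h) (hi : i ≤ M) : h i ≤ i := by
  induction i with
  | zero => simp [hb.start]
  | succ k ih =>
    have hk := ih (by omega)
    have hstep := hb.isWalk k (by omega)
    push_cast
    omega

lemma IsWalk.isPeak_or_isValley_iff (hw : IsWalk M h) (hi : i + 1 < M) :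
    IsPeak h i ∨ IsValley h i ↔ h i = h (i + 2) := by
  have hstep := hw.apply_add_two hi
  unfold IsPeak IsValley
  omega

lemma IsPeak.not_isValley (hp : IsPeak h i) : ¬ IsValley h i := by
  unfold IsPeak IsValley at *
  omega

lemma reflectAt_apply (h : ℕ → ℤ) (i j : ℕ) :
    reflectAt h i j = if j = i + 1 then h i + h (i + 2) - h (i + 1) else h j := by
  simp [reflectAt, Function.update_apply]

lemma reflectAt_apply_self (h : ℕ → ℤ) (i : ℕ) :
    reflectAt h i (i + 1) = h i + h (i + 2) - h (i + 1) := by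
  simp [reflectAt]

lemma reflectAt_of_ne (h : ℕ → ℤ) (hx : x ≠ i + 1) : reflectAt h i x = h x :=
  Function.update_of_ne hx _ _

lemma reflectAt_reflectAt (h : ℕ → ℤ) (i : ℕ) : reflectAt (reflectAt h i) i = h := by
  simp [reflectAt]

lemma IsValley.reflectAt_apply_self (hv : IsValley h i) :
    reflectAt h i (i + 1) = h (i + 1) + 2 := by
  rw [Cooling.reflectAt_apply_self, hv.1, hv.2]
  ring

lemma IsValley.isPeak_reflectAt (hv : IsValley h i) : IsPeak (reflectAt h i) i := by
  rw [IsPeak, hv.reflectAt_apply_self, reflectAt_of_ne h (by omega), reflectAt_of_ne h (by omega),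
    hv.1, hv.2]
  omega

lemma IsValley.le_reflectAt (hv : IsValley h i) (x : ℕ) : h x ≤ reflectAt h i x := by
  rcases eq_or_ne x (i + 1) with rfl | hx
  · rw [hv.reflectAt_apply_self]
    omega
  · rw [reflectAt_of_ne h hx]

lemma mem_levelSet : x ∈ levelSet M h c ↔ x < M ∧ c ≤ max (h x) (h (x + 1)) := by
  rw [levelSet, mem_filter, mem_range]

lemma card_levelSet_le (M : ℕ) (h : ℕ → ℤ) (c : ℤ) : #(levelSet M h c) ≤ M :=
  (card_filter_le _ _).trans (card_range M).le

lemma levelSet_subset (hcd : d ≤ c) (hhg : ∀ x, h x ≤ g x) : levelSet M h c ⊆ levelSet M g d :=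
  fun x hx => mem_levelSet.2 ⟨(mem_levelSet.1 hx).1,
    hcd.trans ((mem_levelSet.1 hx).2.trans (max_le_max (hhg x) (hhg (x + 1))))⟩

lemma potential_nonneg (M : ℕ) (h : ℕ → ℤ) : 0 ≤ potential M h := by
  refine sum_nonneg fun c _ => sub_nonneg.2 ?_
  have hcard : #(intervals (levelSet M h c)) ≤ 2 * M * #(levelSet M h c) :=
    (card_intervals_le _).trans
      (Nat.mul_le_mul_right _ ((card_levelSet_le M h c).trans (by omega)))
  exact_mod_cast hcard

lemma IsWalk.sum_card_levelSet_le (hw : IsWalk M h) :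
    ∑ c ∈ Icc (1 : ℤ) M, #(levelSet M h c) ≤ ∑ x ∈ range M, (|h x|.toNat + 1) := by
  let reaches (c : ℤ) (x : ℕ) : Prop := c ≤ max (h x) (h (x + 1))
  calc ∑ c ∈ Icc (1 : ℤ) M, #(levelSet M h c)
      = ∑ x ∈ range M, #(bipartiteBelow reaches (Icc (1 : ℤ) M) x) :=
        sum_card_bipartiteAbove_eq_sum_card_bipartiteBelow reaches
    _ ≤ ∑ x ∈ range M, #(Icc (1 : ℤ) (|h x| + 1)) := by
        refine sum_le_sum fun x hx => card_le_card fun c hc => ?_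
        obtain ⟨hc1, hcx⟩ := mem_filter.1 hc
        have hstep := hw x (mem_range.1 hx)
        have habs := le_abs_self (h x)
        have hmax : max (h x) (h (x + 1)) ≤ |h x| + 1 := by omega
        exact mem_Icc.2 ⟨(mem_Icc.1 hc1).1, hcx.trans hmax⟩
    _ = ∑ x ∈ range M, (|h x|.toNat + 1) := by
        refine sum_congr rfl fun x _ => ?_
        have habs := abs_nonneg (h x)
        rw [Int.card_Icc]
        omega

lemma IsWalk.potential_le (hw : IsWalk M h) :
    potential M h ≤ 2 * M * ∑ x ∈ range M, (|h x| + 1) := by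
  have hcount : (∑ c ∈ Icc (1 : ℤ) M, #(levelSet M h c) : ℤ) ≤ ∑ x ∈ range M, (|h x| + 1) := by
    have hnat := hw.sum_card_levelSet_le
    zify at hnat
    simpa using hnat
  calc potential M h
      ≤ ∑ c ∈ Icc (1 : ℤ) M, 2 * M * (#(levelSet M h c) : ℤ) :=
        sum_le_sum fun c _ => sub_le_self _ (by positivity)
    _ = 2 * M * ∑ c ∈ Icc (1 : ℤ) M, (#(levelSet M h c) : ℤ) := (mul_sum ..).symm
    _ ≤ 2 * M * ∑ x ∈ range M, (|h x| + 1) := mul_le_mul_of_nonneg_left hcount (by positivity)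

lemma levelSet_reflectAt_of_isPeak (hp : IsPeak h i) (hc : c = h (i + 1)) :
    levelSet M (reflectAt h i) c = levelSet M h c \ {i, i + 1} := by
  obtain ⟨hleft, hright⟩ := hp
  ext x
  simp only [mem_sdiff, mem_insert, mem_singleton, mem_levelSet, reflectAt_apply]
  grind

lemma levelSet_reflectAt_of_isPeak_of_ne (hp : IsPeak h i) (hc : c ≠ h (i + 1)) :
    levelSet M (reflectAt h i) c = levelSet M h c := by
  obtain ⟨hleft, hright⟩ := hp
  ext x
  simp only [mem_levelSet, reflectAt_apply]
  grind

lemma pair_subset_levelSet (hi : i + 1 < M) : {i, i + 1} ⊆ levelSet M h (h (i + 1)) := by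
  simp only [insert_subset_iff, singleton_subset_iff, mem_levelSet]
  exact ⟨⟨by omega, le_max_right _ _⟩, hi, le_max_left _ _⟩

lemma IsPeak.potDiff_eq (hp : IsPeak h i) (hi : i + 1 < M) (h1 : 1 ≤ h (i + 1))
    (hM : h (i + 1) ≤ M) :
    potDiff M h i = numMeeting (levelSet M h (h (i + 1))) i - 4 * M := by
  set S := levelSet M h (h (i + 1)) with hS
  have hintervals : (#(intervals (S \ {i, i + 1})) : ℤ) + numMeeting S i = #(intervals S) := by
    exact_mod_cast card_intervals_sdiff_add_numMeeting S i
  have hcard : (#(S \ {i, i + 1}) : ℤ) + 2 = #S := by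
    have hpair := card_sdiff_add_card_eq_card (pair_subset_levelSet (h := h) hi)
    rw [card_pair (by omega)] at hpair
    exact_mod_cast hpair
  rw [potDiff, potential, potential, ← sum_sub_distrib,
    sum_eq_single_of_mem _ (mem_Icc.2 ⟨h1, hM⟩), levelSet_reflectAt_of_isPeak hp rfl, ← hS,
    ← hintervals, ← hcard]
  · ring
  · intro c _ hc
    rw [levelSet_reflectAt_of_isPeak_of_ne hp hc, sub_self]

lemma IsPeak.potDiff_eq_zero (hp : IsPeak h i) (h1 : h (i + 1) < 1) : potDiff M h i = 0 := by
  rw [potDiff, potential, potential, ← sum_sub_distrib]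
  refine sum_eq_zero fun c hc => ?_
  have hc1 := (mem_Icc.1 hc).1
  rw [levelSet_reflectAt_of_isPeak_of_ne hp (by omega), sub_self]

lemma potDiff_reflectAt (M : ℕ) (h : ℕ → ℤ) (i : ℕ) :
    potDiff M (reflectAt h i) i = -potDiff M h i := by
  simp [potDiff, reflectAt_reflectAt]

lemma IsValley.potDiff_eq (hv : IsValley h i) (hi : i + 1 < M) (h1 : -1 ≤ h (i + 1))
    (hM : h (i + 1) + 2 ≤ M) :
    potDiff M h i = 4 * M - numMeeting (levelSet M (reflectAt h i) (h (i + 1) + 2)) i := by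
  have hpeak := hv.isPeak_reflectAt.potDiff_eq hi (by rw [hv.reflectAt_apply_self]; omega)
    (by rwa [hv.reflectAt_apply_self])
  rw [potDiff_reflectAt, hv.reflectAt_apply_self] at hpeak
  omega

lemma IsValley.potDiff_eq_zero (hv : IsValley h i) (h1 : h (i + 1) < -1) :
    potDiff M h i = 0 := by
  rw [← neg_eq_zero, ← potDiff_reflectAt]
  exact hv.isPeak_reflectAt.potDiff_eq_zero (by rw [hv.reflectAt_apply_self]; omega)

lemma IsPeak.numMeeting_le (hp : IsPeak h i) (hl : h (i - 1) < h (i + 1)) :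
    numMeeting (levelSet M h (h (i + 1))) i ≤
      2 * #(runFrom (levelSet M h (h (i + 1))) (i + 1)) + 1 := by
  refine Cooling.numMeeting_le fun x hx hxi => ?_
  subst hxi
  have hmax := (mem_levelSet.1 hx).2
  have hup := hp.1
  rw [Nat.add_sub_cancel] at hl
  omega

lemma IsPeak.lt_of_longBefore (hw : IsWalk M h) (hi : i < M) (hp : IsPeak h i)
    (hl : LongBefore h i) : h (i - 1) < h (i + 1) := by
  obtain ⟨hi0, hne⟩ := hl
  have hstep := hw (i - 1) (by omega)
  rw [Nat.sub_add_cancel (by omega)] at hstep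
  have hup := hp.1
  omega

lemma IsBridge.potDiff_lt_zero (hb : IsBridge M h) (hi : i + 1 < M) (hp : IsPeak h i)
    (hl : LongBefore h i) (h1 : 1 ≤ h (i + 1)) : potDiff M h i < 0 := by
  have hle := hb.apply_le (i := i + 1) (by omega)
  push_cast at hle
  have hmeet := hp.numMeeting_le (M := M) (hp.lt_of_longBefore hb.isWalk (by omega) hl)
  have hrun := (card_runFrom_le (levelSet M h (h (i + 1))) (i + 1)).trans (card_levelSet_le _ _ _)
  rw [hp.potDiff_eq hi h1 (by omega)]
  omega

/-! ### Pairing a valley with the peak at the end of its rise -/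

lemma IsRise.apply_eq (hr : IsRise h a b) (hax : a ≤ x) (hxb : x ≤ b) :
    h x = h a + (x - a) := by
  induction x, hax using Nat.le_induction with
  | base => simp
  | succ x hax ih =>
    rw [hr x hax hxb, ih (by omega)]
    push_cast
    ring

lemma IsRise.exists_maximal (hr : IsRise h a b) (hbM : b ≤ M) :
    ∃ c, b ≤ c ∧ c ≤ M ∧ IsRise h a c ∧ (c = M ∨ h (c + 1) ≠ h c + 1) := by
  induction hk : M - b generalizing b with
  | zero => exact ⟨b, le_rfl, hbM, hr, Or.inl (by omega)⟩
  | succ k ih =>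
    by_cases hstep : h (b + 1) = h b + 1
    · have hr' : IsRise h a (b + 1) := fun x hax hxb =>
        (Nat.lt_succ_iff_lt_or_eq.1 hxb).elim (hr x hax) fun hx => hx ▸ hstep
      obtain ⟨c, hbc, hc⟩ := ih hr' (by omega) (by omega)
      exact ⟨c, by omega, hc⟩
    · exact ⟨b, le_rfl, hbM, hr, Or.inr hstep⟩

lemma IsValley.isRise_of_longAfter (hw : IsWalk M h) (hv : IsValley h i) (hl : LongAfter M h i) :
    IsRise h (i + 1) (i + 3) := by
  intro x hx hx'
  obtain rfl | rfl : x = i + 1 ∨ x = i + 2 := by omega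
  · exact hv.2
  · have hstep := hw.apply_add_three hl.1
    have hright := hv.2
    have hne := hl.2
    change h (i + 3) = h (i + 2) + 1
    omega

lemma IsBridge.exists_isPeak_of_isValley (hb : IsBridge M h) {v : ℕ} (hv : IsValley h v)
    (hl : LongAfter M h v) (h1 : -1 ≤ h (v + 1)) :
    ∃ p, v + 2 ≤ p ∧ p + 1 < M ∧ IsRise h (v + 1) (p + 1) ∧ IsPeak h p := by
  obtain ⟨c, hvc, hcM, hrise, hend⟩ := (hv.isRise_of_longAfter hb.isWalk hl).exists_maximal hl.1
  obtain ⟨p, rfl⟩ : ∃ p, c = p + 1 := ⟨c - 1, by omega⟩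
  have hheight := hrise.apply_eq (x := p + 1) (by omega) le_rfl
  have hpM : p + 1 ≠ M := by
    intro hM
    rw [hM, hb.finish] at hheight
    omega
  have hdown : h (p + 2) = h (p + 1) - 1 :=
    (hb.isWalk (p + 1) (by omega)).resolve_left (hend.resolve_left hpM)
  have hup := hrise p (by omega) p.lt_succ_self
  exact ⟨p, by omega, by omega, hrise, by omega, hdown⟩

lemma IsRise.Icc_subset_levelSet_reflectAt {v p : ℕ} (hr : IsRise h (v + 1) (p + 1))
    (hv : IsValley h v) (hpM : p < M) :
    Icc v p ⊆ levelSet M (reflectAt h v) (h (v + 1) + 2) := by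
  intro x hx
  obtain ⟨hvx, hxp⟩ := mem_Icc.1 hx
  refine mem_levelSet.2 ⟨by omega, le_max_iff.2 ?_⟩
  obtain rfl | rfl | hx2 : x = v ∨ x = v + 1 ∨ v + 2 ≤ x := by omega
  · exact Or.inr hv.reflectAt_apply_self.ge
  · exact Or.inl hv.reflectAt_apply_self.ge
  · have hheight := hr.apply_eq (x := x + 1) (by omega) (by omega)
    rw [reflectAt_of_ne h (by omega : x + 1 ≠ v + 1), hheight]
    push_cast
    omega

/-- By concavity of the contribution of a component, what the reflection of a valley gains is
outweighed by what the reflection of the peak above it loses. -/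
lemma IsBridge.potDiff_add_potDiff_le (hb : IsBridge M h) {v p : ℕ} (hvp : v + 2 ≤ p)
    (hpM : p + 1 < M) (hr : IsRise h (v + 1) (p + 1)) (hv : IsValley h v) (hp : IsPeak h p)
    (h1 : -1 ≤ h (v + 1)) : potDiff M h v + potDiff M h p ≤ -2 := by
  have hle := hb.apply_le (i := p + 1) (by omega)
  push_cast at hle
  have hheight := hr.apply_eq (x := p + 1) (by omega) le_rfl
  have hheight' := hr.apply_eq (x := p - 1) (by omega) (by omega)
  push_cast [Nat.cast_sub (by omega : 1 ≤ p)] at hheight hheight'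
  have hpeak := hp.numMeeting_le (M := M) (by omega)
  have hsubset : levelSet M h (h (p + 1)) ⊆ levelSet M (reflectAt h v) (h (v + 1) + 2) :=
    levelSet_subset (by omega) hv.le_reflectAt
  have hvalley := le_numMeeting (by omega : v < p) hsubset
    (hr.Icc_subset_levelSet_reflectAt hv (by omega))
  rw [hp.potDiff_eq hpM (by omega) (by omega), hv.potDiff_eq (by omega) h1 (by omega)]
  omega

end Potential

/-! ### Reversal of time -/

section Reverse

variable {M i x : ℕ} {h : ℕ → ℤ} {c : ℤ}

/-- The path `h` of length `M` read backwards. Its value past `M` is irrelevant. -/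
def reverse (M : ℕ) (h : ℕ → ℤ) : ℕ → ℤ := fun i => h (M - i)

lemma IsBridge.reverse (hb : IsBridge M h) : IsBridge M (reverse M h) where
  isWalk i hi := by
    have hstep := hb.isWalk (M - (i + 1)) (by omega)
    rw [show M - (i + 1) + 1 = M - i by omega] at hstep
    simp only [Cooling.reverse]
    omega
  start := hb.finish
  finish := by simp [Cooling.reverse, hb.start]

lemma mem_levelSet_reverse :
    x ∈ levelSet M (reverse M h) c ↔ x < M ∧ M - 1 - x ∈ levelSet M h c := by
  rw [mem_levelSet, mem_levelSet]
  refine and_congr_right fun hx => ?_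
  rw [reverse, reverse, show M - x = M - 1 - x + 1 by omega, show M - (x + 1) = M - 1 - x by omega,
    max_comm]
  exact (and_iff_right (by omega)).symm

lemma potential_reverse (M : ℕ) (h : ℕ → ℤ) : potential M (reverse M h) = potential M h := by
  refine sum_congr rfl fun c _ => ?_
  have hlt : ∀ g, ∀ x ∈ levelSet M g c, x < M := fun g x hx => (mem_levelSet.1 hx).1
  have hto : ∀ x ∈ levelSet M (reverse M h) c, M - 1 - x ∈ levelSet M h c :=
    fun x hx => (mem_levelSet_reverse.1 hx).2
  have hfrom : ∀ x ∈ levelSet M h c, M - 1 - x ∈ levelSet M (reverse M h) c := fun x hx => by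
    have hxM := hlt h x hx
    rw [mem_levelSet_reverse, Nat.sub_sub_self (by omega)]
    exact ⟨by omega, hx⟩
  rw [(card_le_of_reflect (hlt _) hto).antisymm (card_le_of_reflect (hlt _) hfrom),
    (card_intervals_le_of_reflect (hlt _) hto).antisymm
      (card_intervals_le_of_reflect (hlt _) hfrom)]

lemma reverse_sub_left (hi : i + 1 < M) : reverse M h (M - 2 - i) = h (i + 2) :=
  congrArg h (by omega)

lemma reverse_sub_mid (hi : i + 1 < M) : reverse M h (M - 2 - i + 1) = h (i + 1) :=
  congrArg h (by omega)

lemma reverse_sub_right (hi : i + 1 < M) : reverse M h (M - 2 - i + 2) = h i :=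
  congrArg h (by omega)

lemma reflectAt_reverse (hi : i + 1 < M) :
    reflectAt (reverse M h) (M - 2 - i) = reverse M (reflectAt h i) := by
  funext j
  simp only [reflectAt_apply, reverse_sub_left hi, reverse_sub_mid hi, reverse_sub_right hi]
  rw [reverse, reverse, reflectAt_apply, add_comm (h i)]
  exact if_congr (by omega) rfl rfl

lemma potDiff_reverse (hi : i + 1 < M) : potDiff M (reverse M h) (M - 2 - i) = potDiff M h i := by
  rw [potDiff, reflectAt_reverse hi, potential_reverse, potential_reverse, potDiff]

lemma isPeak_reverse (hi : i + 1 < M) : IsPeak (reverse M h) (M - 2 - i) ↔ IsPeak h i := by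
  rw [IsPeak, reverse_sub_left hi, reverse_sub_mid hi, reverse_sub_right hi]
  exact and_comm

lemma isValley_reverse (hi : i + 1 < M) : IsValley (reverse M h) (M - 2 - i) ↔ IsValley h i := by
  rw [IsValley, reverse_sub_left hi, reverse_sub_mid hi, reverse_sub_right hi]
  exact and_comm

lemma longBefore_reverse (hi : i + 1 < M) :
    LongBefore (reverse M h) (M - 2 - i) ↔ LongAfter M h i := by
  have hiff : M - 2 - i ≠ 0 ↔ i + 2 < M := by omega
  rw [LongBefore, LongAfter, reverse_sub_mid hi, hiff]
  refine and_congr_right fun hi' => ?_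
  rw [reverse, show M - (M - 2 - i - 1) = i + 3 by omega, ne_comm]

lemma longAfter_reverse (hi : i + 1 < M) :
    LongAfter M (reverse M h) (M - 2 - i) ↔ LongBefore h i := by
  have hiff : M - 2 - i + 2 < M ↔ i ≠ 0 := by omega
  rw [LongBefore, LongAfter, reverse_sub_mid hi, hiff, reverse,
    show M - (M - 2 - i + 3) = i - 1 by omega, ne_comm (a := h (i + 1))]

end Reverse

/-! ### Drift of the one-sided potential -/

section Drift

variable {M i a b c : ℕ} {h : ℕ → ℤ}

/-- Reflecting the vertex `i + 1` moves one end of a rise of length at least two, at a height where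
the potential is affected. A valley that also ends a long descent is not counted. -/
def RiseMove (M : ℕ) (h : ℕ → ℤ) (i : ℕ) : Prop :=
  (IsValley h i ∧ LongAfter M h i ∧ ¬ LongBefore h i ∧ -1 ≤ h (i + 1)) ∨
    (IsPeak h i ∧ LongBefore h i ∧ 1 ≤ h (i + 1))

/-- The mirror image of `RiseMove` under the reversal of time. -/
def DescentMove (M : ℕ) (h : ℕ → ℤ) (i : ℕ) : Prop :=
  (IsValley h i ∧ LongBefore h i ∧ ¬ LongAfter M h i ∧ -1 ≤ h (i + 1)) ∨
    (IsPeak h i ∧ LongAfter M h i ∧ 1 ≤ h (i + 1))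

/-- What the vertex `i + 1` contributes to the drift of the potential, with one extra unit for each
long monotone run that its reflection moves. -/
noncomputable def runDrift (M : ℕ) (h : ℕ → ℤ) (i : ℕ) : ℤ :=
  (if RiseMove M h i then potDiff M h i + 1 else 0) +
    (if DescentMove M h i then potDiff M h i + 1 else 0)

/-- The vertex `i + 1` is a local extremum whose reflection affects the potential. -/
def Relevant (h : ℕ → ℤ) (i : ℕ) : Prop :=
  (IsPeak h i ∧ 1 ≤ h (i + 1)) ∨ (IsValley h i ∧ -1 ≤ h (i + 1))

/-- The flip at position `i` is permitted and does not increase the number of mismatches: the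
vertex `i + 1` is a local extremum adjacent to a monotone run of length at least two. -/
def Active (M : ℕ) (h : ℕ → ℤ) (i : ℕ) : Prop :=
  (IsPeak h i ∨ IsValley h i) ∧ (LongBefore h i ∨ LongAfter M h i)

lemma sum_add_sum_nonpos_of_matching {ι κ : Type*} {s : Finset ι} {t : Finset κ} {f : ι → ℤ}
    {g : κ → ℤ} (e : ι → κ) (he : ∀ x ∈ s, e x ∈ t) (hinj : Set.InjOn e s)
    (hpair : ∀ x ∈ s, f x + g (e x) ≤ 0) (hg : ∀ y ∈ t, g y ≤ 0) :
    ∑ x ∈ s, f x + ∑ y ∈ t, g y ≤ 0 := by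
  have himage : ∑ y ∈ t, g y ≤ ∑ y ∈ s.image e, g y := by
    rw [← sum_sdiff (image_subset_iff.2 he)]
    exact add_le_of_nonpos_left (sum_nonpos fun y hy => hg y (sdiff_subset hy))
  rw [sum_image hinj] at himage
  have hsum := sum_nonpos hpair
  rw [sum_add_distrib] at hsum
  linarith

lemma IsRise.not_isValley (hr : IsRise h a c) (hab : a ≤ b) (hbc : b < c) : ¬ IsValley h b :=
  fun hv => by
    have hup := hr b hab hbc
    have hdown := hv.1
    omega

lemma IsRise.longBefore (hr : IsRise h a (b + 1)) (hab : a + 1 ≤ b) : LongBefore h b := by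
  refine ⟨by omega, ?_⟩
  have hleft := hr.apply_eq (x := b - 1) (by omega) (by omega)
  have hright := hr.apply_eq (x := b + 1) (by omega) le_rfl
  push_cast [Nat.cast_sub (by omega : 1 ≤ b)] at hleft hright
  omega

lemma IsBridge.sum_riseMove_le (hb : IsBridge M h) :
    ∑ i ∈ range (M - 1), (if RiseMove M h i then potDiff M h i + 1 else 0) ≤ 0 := by
  let valleys := {i ∈ range (M - 1) |
    IsValley h i ∧ LongAfter M h i ∧ ¬ LongBefore h i ∧ -1 ≤ h (i + 1)}
  let peaks := {i ∈ range (M - 1) | IsPeak h i ∧ LongBefore h i ∧ 1 ≤ h (i + 1)}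
  have hsplit : {i ∈ range (M - 1) | RiseMove M h i} = valleys ∪ peaks := by
    ext i
    simp only [valleys, peaks, mem_union, mem_filter]
    rw [RiseMove, and_or_left]
  rw [← sum_filter, hsplit,
    sum_union (disjoint_filter.2 fun i _ hv hp => hp.1.not_isValley hv.1)]
  have hvalley : ∀ v ∈ valleys, IsValley h v ∧ LongAfter M h v ∧ -1 ≤ h (v + 1) := fun v hv =>
    (mem_filter.1 hv).2.imp_right fun hv => ⟨hv.1, hv.2.2⟩
  have hmatch : ∀ v ∈ valleys, ∃ p, v + 2 ≤ p ∧ p + 1 < M ∧ IsRise h (v + 1) (p + 1) ∧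
      IsPeak h p := fun v hv =>
    hb.exists_isPeak_of_isValley (hvalley v hv).1 (hvalley v hv).2.1 (hvalley v hv).2.2
  choose! p hvp hpM hrise hpeak using hmatch
  refine sum_add_sum_nonpos_of_matching p (fun v hv => ?_) (fun v hv v' hv' hvv' => ?_)
    (fun v hv => ?_) (fun q hq => ?_)
  · have hheight := (hrise v hv).apply_eq (x := p v + 1) (by have := hvp v hv; omega) le_rfl
    have hlow := (hvalley v hv).2.2
    have hle := hvp v hv
    have hlt := hpM v hv
    push_cast at hheight
    exact mem_filter.2 ⟨mem_range.2 (by omega), hpeak v hv, (hrise v hv).longBefore hle, by omega⟩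
  · have hno_valley : ∀ v ∈ valleys, ∀ v' ∈ valleys, p v = p v' → ¬ v < v' :=
      fun v hv v' hv' hvv' hlt =>
        (hrise v hv).not_isValley hlt (by have := hvp v' hv'; omega) (hvalley v' hv').1
    exact le_antisymm (not_lt.1 (hno_valley v' hv' v hv hvv'.symm))
      (not_lt.1 (hno_valley v hv v' hv' hvv'))
  · have hle := hb.potDiff_add_potDiff_le (hvp v hv) (hpM v hv) (hrise v hv) (hvalley v hv).1
      (hpeak v hv) (hvalley v hv).2.2
    omega
  · obtain ⟨hqM, hp, hl, h1⟩ := mem_filter.1 hq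
    rw [mem_range] at hqM
    exact hb.potDiff_lt_zero (by omega) hp hl h1

lemma riseMove_reverse (hi : i + 1 < M) :
    RiseMove M (reverse M h) (M - 2 - i) ↔ DescentMove M h i := by
  rw [RiseMove, DescentMove, isPeak_reverse hi, isValley_reverse hi, longBefore_reverse hi,
    longAfter_reverse hi, reverse_sub_mid hi]

lemma IsBridge.sum_descentMove_le (hb : IsBridge M h) :
    ∑ i ∈ range (M - 1), (if DescentMove M h i then potDiff M h i + 1 else 0) ≤ 0 := by
  have hrise := hb.reverse.sum_riseMove_le
  rw [← sum_range_reflect] at hrise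
  refine (sum_congr rfl fun i hi => ?_).trans_le hrise
  rw [mem_range] at hi
  rw [show M - 1 - 1 - i = M - 2 - i by omega, potDiff_reverse (by omega)]
  simp only [riseMove_reverse (show i + 1 < M by omega)]

lemma runDrift_eq_zero_of_not_active (ha : ¬ Active M h i) : runDrift M h i = 0 := by
  have hrise : ¬ RiseMove M h i := fun hm => ha <| by
    unfold RiseMove Active at *
    tauto
  have hdescent : ¬ DescentMove M h i := fun hm => ha <| by
    unfold DescentMove Active at *
    tauto
  rw [runDrift, if_neg hrise, if_neg hdescent, add_zero]

lemma IsBridge.sum_runDrift_le (hb : IsBridge M h) :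
    ∑ i ∈ range (M - 1) with Active M h i, runDrift M h i ≤ 0 := by
  rw [sum_filter_of_ne fun i _ => not_imp_comm.1 runDrift_eq_zero_of_not_active]
  exact sum_add_distrib.trans_le (add_nonpos hb.sum_riseMove_le hb.sum_descentMove_le)

lemma potDiff_eq_zero_of_not_relevant (he : IsPeak h i ∨ IsValley h i) (hr : ¬ Relevant h i) :
    potDiff M h i = 0 := by
  rcases he with hp | hv
  · exact hp.potDiff_eq_zero (not_le.1 fun h1 => hr (Or.inl ⟨hp, h1⟩))
  · exact hv.potDiff_eq_zero (not_le.1 fun h1 => hr (Or.inr ⟨hv, h1⟩))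

lemma runDrift_eq_potDiff_add (he : IsPeak h i ∨ IsValley h i)
    (hl : LongBefore h i ↔ ¬ LongAfter M h i) :
    runDrift M h i = potDiff M h i + if Relevant h i then 1 else 0 := by
  have hrelevant : RiseMove M h i ∨ DescentMove M h i ↔ Relevant h i := by
    unfold RiseMove DescentMove Relevant at *
    tauto
  have hdisjoint : ¬ (RiseMove M h i ∧ DescentMove M h i) := by
    have hpv : IsPeak h i → ¬ IsValley h i := IsPeak.not_isValley
    unfold RiseMove DescentMove at *
    tauto
  by_cases hr : Relevant h i
  · rw [runDrift, if_pos hr]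
    rcases hrelevant.2 hr with hm | hm
    · rw [if_pos hm, if_neg fun hm' => hdisjoint ⟨hm, hm'⟩, add_zero]
    · rw [if_neg fun hm' => hdisjoint ⟨hm', hm⟩, if_pos hm, zero_add]
  · rw [runDrift, if_neg hr, if_neg fun hm => hr (hrelevant.1 (Or.inl hm)),
      if_neg fun hm => hr (hrelevant.1 (Or.inr hm)), potDiff_eq_zero_of_not_relevant he hr]

lemma IsBridge.potDiff_le_runDrift_add (hb : IsBridge M h) (hi : i + 1 < M)
    (he : IsPeak h i ∨ IsValley h i) (hl : LongBefore h i) (hr : LongAfter M h i) :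
    potDiff M h i ≤ runDrift M h i + 4 * M := by
  have hle := hb.apply_le (i := i) (by omega)
  have hle' := hb.apply_le (i := i + 1) (by omega)
  push_cast at hle'
  by_cases hrel : Relevant h i
  · rcases hrel with ⟨hp, h1⟩ | ⟨hv, h1⟩
    · have hrise : RiseMove M h i := Or.inr ⟨hp, hl, h1⟩
      have hdescent : DescentMove M h i := Or.inr ⟨hp, hr, h1⟩
      rw [runDrift, if_pos hrise, if_pos hdescent, hp.potDiff_eq hi h1 (by omega)]
      omega
    · have hrise : ¬ RiseMove M h i := by
        rintro (hm | hm)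
        exacts [hm.2.2.1 hl, hm.1.not_isValley hv]
      have hdescent : ¬ DescentMove M h i := by
        rintro (hm | hm)
        exacts [hm.2.2.1 hr, hm.1.not_isValley hv]
      have hleft := hv.1
      rw [runDrift, if_neg hrise, if_neg hdescent, hv.potDiff_eq hi h1 (by omega)]
      omega
  · have hrise : ¬ RiseMove M h i := fun hm => hrel <| by
      unfold RiseMove Relevant at *
      tauto
    have hdescent : ¬ DescentMove M h i := fun hm => hrel <| by
      unfold DescentMove Relevant at *
      tauto
    rw [runDrift, if_neg hrise, if_neg hdescent, potDiff_eq_zero_of_not_relevant he hrel]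
    positivity

end Drift

/-! ### The Lyapunov function -/

section Lyapunov

variable {M i j k : ℕ} {h : ℕ → ℤ}

/-- The number of mismatches of the word of length `M` whose broken line is `h`. -/
noncomputable def pathMismatches (M : ℕ) (h : ℕ → ℤ) : ℕ :=
  #{j ∈ range (M - 1) | h j ≠ h (j + 2)}

/-- The Lyapunov function of the cooling process. The weight of the mismatches pays for the flips
that touch two long runs, which decrease their number by two. -/
noncomputable def lyapunov (M : ℕ) (h : ℕ → ℤ) : ℤ :=
  potential M h + potential M (-h) + (4 * M + 1) * pathMismatches M h

lemma reflectAt_neg (h : ℕ → ℤ) (i : ℕ) : reflectAt (-h) i = -reflectAt h i := by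
  funext j
  simp only [reflectAt_apply, Pi.neg_apply]
  split_ifs <;> ring

lemma isPeak_neg : IsPeak (-h) i ↔ IsValley h i := by
  simp only [IsPeak, IsValley, Pi.neg_apply]
  omega

lemma isValley_neg : IsValley (-h) i ↔ IsPeak h i := by
  rw [← isPeak_neg, neg_neg]

lemma longBefore_neg : LongBefore (-h) i ↔ LongBefore h i := by
  simp [LongBefore]

lemma longAfter_neg : LongAfter M (-h) i ↔ LongAfter M h i := by
  simp [LongAfter]

lemma active_neg : Active M (-h) i ↔ Active M h i := by
  rw [Active, Active, isPeak_neg, isValley_neg, longBefore_neg, longAfter_neg,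
    or_comm (b := IsPeak h i)]

lemma relevant_or_relevant_neg (he : IsPeak h i ∨ IsValley h i) :
    Relevant h i ∨ Relevant (-h) i := by
  unfold Relevant IsPeak IsValley at *
  simp only [Pi.neg_apply]
  omega

lemma cast_pathMismatches (M : ℕ) (h : ℕ → ℤ) :
    (pathMismatches M h : ℤ) = ∑ j ∈ range (M - 1), if h j ≠ h (j + 2) then 1 else 0 := by
  rw [pathMismatches, card_filter, Nat.cast_sum]
  exact sum_congr rfl fun j _ => by push_cast; rfl

lemma pathMismatches_le (M : ℕ) (h : ℕ → ℤ) : pathMismatches M h ≤ M :=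
  (card_filter_le _ _).trans ((card_range _).trans_le (Nat.sub_le M 1))

lemma IsWalk.reflectAt_mismatch_before (hw : IsWalk M h) (hj : j + 2 < M)
    (he : h (j + 1) = h (j + 3)) :
    reflectAt h (j + 1) j ≠ reflectAt h (j + 1) (j + 2) ↔ h j = h (j + 2) := by
  have hstep := hw j (by omega)
  have hstep' := hw.apply_add_two (i := j) (by omega)
  have hmid : reflectAt h (j + 1) (j + 2) = h (j + 1) + h (j + 3) - h (j + 2) :=
    reflectAt_apply_self h (j + 1)
  rw [reflectAt_of_ne h (by omega), hmid, ← he]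
  omega

lemma IsWalk.reflectAt_mismatch_after (hw : IsWalk M h) (hi : i + 2 < M) (he : h i = h (i + 2)) :
    reflectAt h i (i + 1) ≠ reflectAt h i (i + 3) ↔ h (i + 1) = h (i + 3) := by
  have hstep := hw i (by omega)
  have hstep' := hw.apply_add_three hi
  rw [reflectAt_of_ne h (by omega : i + 3 ≠ i + 1), reflectAt_apply_self, ← he]
  omega

lemma IsWalk.mismatch_reflectAt_sub (hw : IsWalk M h) (hj : j + 1 < M) (hi : i + 1 < M)
    (he : h i = h (i + 2)) :
    ((if reflectAt h i j ≠ reflectAt h i (j + 2) then 1 else 0) -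
        (if h j ≠ h (j + 2) then 1 else 0) : ℤ) =
      (if j + 1 = i then (if LongBefore h i then -1 else 1) else 0) +
        (if j = i + 1 then (if LongAfter M h i then -1 else 1) else 0) := by
  by_cases hji : j + 1 = i
  · subst hji
    have hlong : LongBefore h (j + 1) ↔ h j ≠ h (j + 2) := and_iff_right (Nat.succ_ne_zero j)
    rw [if_congr (hw.reflectAt_mismatch_before hi he) rfl rfl, if_congr hlong rfl rfl]
    split_ifs <;> grind
  by_cases hji' : j = i + 1
  · subst hji'
    have hlong : LongAfter M h i ↔ h (i + 1) ≠ h (i + 3) := and_iff_right hj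
    rw [if_congr (hw.reflectAt_mismatch_after hj he) rfl rfl, if_congr hlong rfl rfl]
    split_ifs <;> grind
  · rw [reflectAt_of_ne h hji', reflectAt_of_ne h (by omega : j + 2 ≠ i + 1), if_neg hji,
      if_neg hji', sub_self, add_zero]

lemma IsWalk.pathMismatches_reflectAt (hw : IsWalk M h) (hi : i + 1 < M) (he : h i = h (i + 2)) :
    (pathMismatches M (reflectAt h i) : ℤ) = pathMismatches M h +
      ((if i ≠ 0 then (if LongBefore h i then -1 else 1) else 0) +
        (if i + 2 < M then (if LongAfter M h i then -1 else 1) else 0)) := by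
  rw [← sub_eq_iff_eq_add', cast_pathMismatches, cast_pathMismatches, ← sum_sub_distrib,
    sum_congr rfl fun j hj => hw.mismatch_reflectAt_sub (by rw [mem_range] at hj; omega) hi he,
    sum_add_distrib, sum_ite_eq']
  congr 1
  · cases i with
    | zero => simp
    | succ k =>
      simp only [Nat.add_right_cancel_iff]
      rw [sum_ite_eq', if_pos (mem_range.2 (by omega)), if_pos k.succ_ne_zero]
  · exact if_congr (by rw [mem_range]; omega) rfl rfl

lemma IsWalk.pathMismatches_reflectAt_of_long (hw : IsWalk M h) (hi : i + 1 < M)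
    (he : h i = h (i + 2)) (hl : LongBefore h i) (hr : LongAfter M h i) :
    (pathMismatches M (reflectAt h i) : ℤ) = pathMismatches M h - 2 := by
  rw [hw.pathMismatches_reflectAt hi he, if_pos hl.1, if_pos hl, if_pos hr.1, if_pos hr]
  ring

lemma IsWalk.pathMismatches_reflectAt_le_iff (hw : IsWalk M h) (hi : i + 1 < M)
    (he : h i = h (i + 2)) (hM : 3 ≤ M) :
    pathMismatches M (reflectAt h i) ≤ pathMismatches M h ↔ LongBefore h i ∨ LongAfter M h i := by
  have hchange := hw.pathMismatches_reflectAt hi he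
  have hl : LongBefore h i → i ≠ 0 := And.left
  have hr : LongAfter M h i → i + 2 < M := And.left
  split_ifs at hchange <;> grind

lemma IsBridge.lyapunov_reflectAt_lt (hb : IsBridge M h) (hi : i + 1 < M) (ha : Active M h i) :
    lyapunov M (reflectAt h i) + 1 ≤ lyapunov M h + (runDrift M h i + runDrift M (-h) i) := by
  obtain ⟨he, hlong⟩ := ha
  have heq := (hb.isWalk.isPeak_or_isValley_iff hi).1 he
  have hneg : IsPeak (-h) i ∨ IsValley (-h) i := by rwa [isPeak_neg, isValley_neg, or_comm]
  have hdiff : lyapunov M (reflectAt h i) = lyapunov M h + potDiff M h i + potDiff M (-h) i +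
      (4 * M + 1) * (pathMismatches M (reflectAt h i) - pathMismatches M h) := by
    simp only [lyapunov, potDiff, reflectAt_neg]
    ring
  rw [hdiff]
  by_cases hboth : LongBefore h i ∧ LongAfter M h i
  · obtain ⟨hl, hr⟩ := hboth
    have hpot := hb.potDiff_le_runDrift_add hi he hl hr
    have hpot' := hb.neg.potDiff_le_runDrift_add hi hneg (longBefore_neg.2 hl) (longAfter_neg.2 hr)
    rw [hb.isWalk.pathMismatches_reflectAt_of_long hi heq hl hr]
    linarith
  · have hone : LongBefore h i ↔ ¬ LongAfter M h i := by tauto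
    have hM : 3 ≤ M := by
      rcases hlong with hl | hr
      · have := hl.1
        omega
      · have := hr.1
        omega
    have hmismatches : (4 * M + 1 : ℤ) *
        (pathMismatches M (reflectAt h i) - pathMismatches M h) ≤ 0 :=
      mul_nonpos_of_nonneg_of_nonpos (by positivity)
        (sub_nonpos.2 (mod_cast (hb.isWalk.pathMismatches_reflectAt_le_iff hi heq hM).2 hlong))
    have hrelevant : (1 : ℤ) ≤ (if Relevant h i then 1 else 0) +
        if Relevant (-h) i then 1 else 0 := by
      rcases relevant_or_relevant_neg he with hr | hr <;> rw [if_pos hr] <;> split_ifs <;> simp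
    rw [runDrift_eq_potDiff_add he hone, runDrift_eq_potDiff_add hneg
      (by rwa [longBefore_neg, longAfter_neg])]
    linarith

lemma IsBridge.sum_lyapunov_reflectAt_le (hb : IsBridge M h) :
    ∑ i ∈ range (M - 1) with Active M h i, (lyapunov M (reflectAt h i) + 1) ≤
      #{i ∈ range (M - 1) | Active M h i} * lyapunov M h := by
  have hdrift := hb.sum_runDrift_le
  have hdrift' := hb.neg.sum_runDrift_le
  rw [filter_congr fun i _ => active_neg] at hdrift'
  calc ∑ i ∈ range (M - 1) with Active M h i, (lyapunov M (reflectAt h i) + 1)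
      ≤ ∑ i ∈ range (M - 1) with Active M h i,
          (lyapunov M h + (runDrift M h i + runDrift M (-h) i)) := by
        refine sum_le_sum fun i hi => ?_
        obtain ⟨hiM, ha⟩ := mem_filter.1 hi
        rw [mem_range] at hiM
        exact hb.lyapunov_reflectAt_lt (by omega) ha
    _ ≤ #{i ∈ range (M - 1) | Active M h i} * lyapunov M h := by
        rw [sum_add_distrib, sum_add_distrib, sum_const, nsmul_eq_mul]
        linarith

lemma lyapunov_nonneg (M : ℕ) (h : ℕ → ℤ) : 0 ≤ lyapunov M h :=
  add_nonneg (add_nonneg (potential_nonneg M h) (potential_nonneg M (-h))) (by positivity)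

lemma IsWalk.lyapunov_le (hw : IsWalk M h) :
    lyapunov M h ≤ 4 * M * ∑ x ∈ range M, |h x| + 9 * M ^ 2 := by
  have hpos := hw.potential_le
  have hneg := hw.neg.potential_le
  simp only [Pi.neg_apply, abs_neg] at hneg
  simp only [sum_add_distrib, sum_const, card_range, nsmul_eq_mul, mul_one] at hpos hneg
  have hmismatches : (4 * M + 1 : ℤ) * pathMismatches M h ≤ (4 * M + 1) * M :=
    mul_le_mul_of_nonneg_left (mod_cast pathMismatches_le M h) (by positivity)
  have hsq : (M : ℤ) ≤ M ^ 2 := mod_cast Nat.le_self_pow two_ne_zero M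
  rw [lyapunov]
  linarith

lemma IsBridge.three_le_of_pathMismatches_ne_zero (hb : IsBridge M h)
    (hne : pathMismatches M h ≠ 0) : 3 ≤ M := by
  obtain ⟨j, hj⟩ := card_ne_zero.1 hne
  obtain ⟨hjM, hmismatch⟩ := mem_filter.1 hj
  rw [mem_range] at hjM
  by_contra! hM
  obtain ⟨rfl, rfl⟩ : M = 2 ∧ j = 0 := by omega
  exact hmismatch (hb.start.trans hb.finish.symm)

lemma IsWalk.mismatch_iff_of_not_active (hw : IsWalk M h) (hno : ∀ i, i + 1 < M → ¬ Active M h i)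
    (hk : k + 2 < M) : h k ≠ h (k + 2) ↔ h (k + 1) ≠ h (k + 3) := by
  constructor
  · intro hne heq
    exact hno (k + 1) hk ⟨(hw.isPeak_or_isValley_iff hk).2 heq, Or.inl ⟨k.succ_ne_zero, hne⟩⟩
  · intro hne heq
    exact hno k (by omega)
      ⟨(hw.isPeak_or_isValley_iff (by omega)).2 heq, Or.inr ⟨hk, hne⟩⟩

lemma IsWalk.apply_sub_of_mismatches (hw : IsWalk M h) (hall : ∀ k, k + 1 < M → h k ≠ h (k + 2))
    (hk : k < M) : h (k + 1) - h k = h 1 - h 0 := by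
  induction k with
  | zero => rfl
  | succ k ih =>
    rw [← ih (by omega)]
    have hstep := hw k (by omega)
    have hstep' := hw.apply_add_two hk
    have hne := hall k hk
    change h (k + 2) - h (k + 1) = h (k + 1) - h k
    omega

lemma IsBridge.exists_not_mismatch (hb : IsBridge M h) (hM : M ≠ 0) :
    ∃ k, k + 1 < M ∧ h k = h (k + 2) := by
  by_contra! hall
  have hlinear : ∀ k ≤ M, h k = k * (h 1 - h 0) := fun k hk => by
    induction k with
    | zero => simp [hb.start]
    | succ k ih =>
      have hstep := hb.isWalk.apply_sub_of_mismatches hall hk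
      push_cast
      linarith [ih (by omega)]
  have hfinish := hlinear M le_rfl
  rw [hb.finish, eq_comm, mul_eq_zero] at hfinish
  have hstep := hb.isWalk 0 (by omega)
  rw [zero_add] at hstep
  omega

lemma IsBridge.exists_active (hb : IsBridge M h) (hne : pathMismatches M h ≠ 0) :
    {i ∈ range (M - 1) | Active M h i}.Nonempty := by
  by_contra! hempty
  have hno : ∀ i, i + 1 < M → ¬ Active M h i := fun i hi =>
    filter_eq_empty_iff.1 hempty (mem_range.2 (by omega))
  have hconst : ∀ k, k + 1 < M → (h k ≠ h (k + 2) ↔ h 0 ≠ h 2) := fun k hk => by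
    induction k with
    | zero => rfl
    | succ k ih => rw [← ih (by omega), hb.isWalk.mismatch_iff_of_not_active hno hk]
  obtain ⟨j, hj⟩ := card_ne_zero.1 hne
  obtain ⟨hjM, hmismatch⟩ := mem_filter.1 hj
  rw [mem_range] at hjM
  obtain ⟨k, hkM, hk⟩ := hb.exists_not_mismatch (by omega)
  exact (hconst k hkM).2 ((hconst j (by omega)).1 hmismatch) hk

end Lyapunov


/-! ### Words as walks -/

section Words

variable {w : Word} {i s : ℕ}

/-- The step of the broken line contributed by a letter. -/
def sign (b : Bool) : ℤ := if b then 1 else -1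

lemma sign_mul_self (b : Bool) : sign b * sign b = 1 := by
  cases b <;> rfl

lemma height_zero (w : Word) : height w 0 = 0 := by
  simp [height]

lemma height_succ (w : Word) (s : ℕ) :
    height w (s + 1) = height w s + (w[s]?).elim 0 sign := by
  rw [height, height, List.take_add_one, List.count_append, List.count_append]
  rcases w[s]? with _ | _ | _ <;> simp [sign] <;> ring

lemma height_succ_of_lt (hs : s < w.length) :
    height w (s + 1) = height w s + sign (w.getD s true) := by
  rw [height_succ, List.getElem?_eq_getElem hs, List.getD_eq_getElem _ _ hs, Option.elim_some]

lemma height_length (w : Word) : height w w.length = 2 * w.count true - w.length := by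
  have hcount := List.count_true_add_count_false (l := w)
  rw [height, List.take_length]
  omega

lemma isWalk_height (w : Word) : IsWalk w.length (height w) := by
  intro s hs
  rw [height_succ_of_lt hs]
  cases w.getD s true
  · exact Or.inr rfl
  · exact Or.inl rfl

lemma isBridge_height (hw : height w w.length = 0) : IsBridge w.length (height w) :=
  ⟨isWalk_height w, height_zero w, hw⟩

lemma length_flip (w : Word) (i : ℕ) : (flip w i).length = w.length := by
  simp [flip]

lemma getElem?_flip (hi : i + 1 < w.length) (s : ℕ) :
    (flip w i)[s]? = if s = i then w[i + 1]? else if s = i + 1 then w[i]? else w[s]? := by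
  have hlt : i < w.length := by omega
  rw [flip, List.getElem?_set, List.getElem?_set, List.length_set, List.getD_eq_getElem _ _ hi,
    List.getD_eq_getElem _ _ hlt, List.getElem?_eq_getElem hi, List.getElem?_eq_getElem hlt]
  grind

lemma height_flip (hi : i + 1 < w.length) : height (flip w i) = reflectAt (height w) i := by
  funext s
  induction s with
  | zero => rw [reflectAt_of_ne _ (by omega), height_zero, height_zero]
  | succ s ih =>
    rw [height_succ, ih, getElem?_flip hi]
    rcases eq_or_ne s i with rfl | hne
    · rw [reflectAt_of_ne _ (by omega), reflectAt_apply_self, if_pos rfl, height_succ w (s + 1)]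
      ring
    rcases eq_or_ne s (i + 1) with rfl | hne'
    · rw [reflectAt_apply_self, reflectAt_of_ne _ (by omega), if_neg hne, if_pos rfl,
        height_succ w i]
      ring
    · rw [reflectAt_of_ne _ hne', reflectAt_of_ne _ (by omega), if_neg hne, if_neg hne',
        height_succ w s]

lemma getD_eq_iff_height_ne (hi : i + 1 < w.length) :
    w.getD i true = w.getD (i + 1) true ↔ height w i ≠ height w (i + 2) := by
  rw [height_succ_of_lt hi, height_succ_of_lt (by omega)]
  cases w.getD i true <;> cases w.getD (i + 1) true <;> simp [sign, add_assoc]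

lemma mismatches_eq_sum (w : Word) :
    mismatches w =
      ∑ j ∈ range (w.length - 1), if w.getD j true = w.getD (j + 1) true then 1 else 0 := by
  induction w with
  | nil => rfl
  | cons a l ih =>
    rcases l with _ | ⟨b, l⟩
    · rfl
    · have hcons : mismatches (a :: b :: l) = mismatches (b :: l) + if a = b then 1 else 0 := by
        simp [mismatches, List.countP_cons]
      rw [hcons, ih, List.length_cons, List.length_cons, List.length_cons, Nat.add_sub_cancel,
        Nat.add_sub_cancel, sum_range_succ']
      rfl

lemma mismatches_eq (w : Word) : mismatches w = pathMismatches w.length (height w) := by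
  rw [mismatches_eq_sum, pathMismatches, card_filter]
  refine sum_congr rfl fun j hj => if_congr (getD_eq_iff_height_ne ?_) rfl rfl
  rw [mem_range] at hj
  omega

lemma mismatches_flip_le_iff (hlen : 3 ≤ w.length) (hi : i + 1 < w.length)
    (he : height w i = height w (i + 2)) :
    mismatches (flip w i) ≤ mismatches w ↔
      LongBefore (height w) i ∨ LongAfter w.length (height w) i := by
  rw [mismatches_eq, mismatches_eq, length_flip, height_flip hi,
    (isWalk_height w).pathMismatches_reflectAt_le_iff hi he hlen]

lemma allowedFlips_eq (hlen : 3 ≤ w.length) :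
    allowedFlips w = {i ∈ range (w.length - 1) | Active w.length (height w) i} := by
  ext i
  rw [allowedFlips, mem_filter, mem_filter, mem_range, mem_range, Nat.lt_sub_iff_add_lt]
  by_cases hi : i + 1 < w.length
  · have hlt : i < w.length := by omega
    rw [Active, CanFlip, (isWalk_height w).isPeak_or_isValley_iff hi, Ne,
      getD_eq_iff_height_ne hi, not_not]
    simp only [hlt, hi, true_and]
    exact and_congr_right fun he => mismatches_flip_le_iff hlen hi he
  · simp only [CanFlip, hi, false_and, and_false]

end Words

/-! ### Foster–Lyapunov bound -/

section FosterLyapunov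

variable {α β : Type*}

lemma tsum_bind_mul (p : PMF α) (f : α → PMF β) (g : β → ℝ≥0∞) :
    ∑' b, p.bind f b * g b = ∑' a, p a * ∑' b, f a b * g b := by
  simp only [PMF.bind_apply, ← ENNReal.tsum_mul_right, ← ENNReal.tsum_mul_left, mul_assoc]
  exact ENNReal.tsum_comm

lemma tsum_pure_mul (a : α) (g : α → ℝ≥0∞) : ∑' b, PMF.pure a b * g b = g a := by
  rw [tsum_eq_single a fun b hb => by rw [PMF.pure_apply_of_ne _ _ hb, zero_mul],
    PMF.pure_apply_self, one_mul]

lemma tsum_map_uniformOfFinset_mul (s : Finset α) (hs : s.Nonempty) (f : α → β) (g : β → ℝ≥0∞) :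
    ∑' b, (PMF.uniformOfFinset s hs).map f b * g b = (#s : ℝ≥0∞)⁻¹ * ∑ a ∈ s, g (f a) := by
  rw [← PMF.bind_pure_comp, tsum_bind_mul]
  simp only [Function.comp_apply, tsum_pure_mul]
  rw [tsum_eq_sum fun a ha => by rw [PMF.uniformOfFinset_apply_of_notMem hs ha, zero_mul],
    mul_sum]
  exact sum_congr rfl fun a ha => by rw [PMF.uniformOfFinset_apply_of_mem hs ha]

lemma tsum_toOuterMeasure_le_of_drift {p : ℕ → PMF α} {κ : α → PMF α} {V : α → ℝ≥0∞} {A : Set α}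
    (hp : ∀ t, p (t + 1) = (p t).bind κ)
    (hV : ∀ a, ∑' b, κ a b * V b + A.indicator 1 a ≤ V a) :
    ∑' t, (p t).toOuterMeasure A ≤ ∑' a, p 0 a * V a := by
  refine ENNReal.tsum_le_of_sum_range_le fun t => ?_
  suffices h : ∑' a, p t a * V a + ∑ i ∈ range t, (p i).toOuterMeasure A ≤ ∑' a, p 0 a * V a from
    le_add_self.trans h
  induction t with
  | zero => simp
  | succ t ih =>
    have hstep : ∑' a, p (t + 1) a * V a + (p t).toOuterMeasure A ≤ ∑' a, p t a * V a :=
      calc ∑' a, p (t + 1) a * V a + (p t).toOuterMeasure A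
          = ∑' a, p t a * (∑' b, κ a b * V b + A.indicator 1 a) := by
            simp only [hp, tsum_bind_mul, PMF.toOuterMeasure_apply, ← ENNReal.tsum_add, mul_add,
              ← Set.indicator_mul_right, Pi.one_apply, mul_one]
        _ ≤ ∑' a, p t a * V a := ENNReal.tsum_le_tsum fun a => by gcongr; exact hV a
    calc ∑' a, p (t + 1) a * V a + ∑ i ∈ range (t + 1), (p i).toOuterMeasure A
        = ∑' a, p (t + 1) a * V a + (p t).toOuterMeasure A +
            ∑ i ∈ range t, (p i).toOuterMeasure A := by
          rw [sum_range_succ, add_assoc, add_comm (∑ i ∈ range t, _)]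
      _ ≤ ∑' a, p t a * V a + ∑ i ∈ range t, (p i).toOuterMeasure A := by gcongr
      _ ≤ ∑' a, p 0 a * V a := ih

end FosterLyapunov

/-! ### The expected convergence time -/

section ConvergenceTime

variable {v w : Word}

/-- The Lyapunov function on words; it is infinite on the words that are not balanced, so that the
drift inequality holds for all words. -/
noncomputable def timeBound (w : Word) : ℝ≥0∞ :=
  if height w w.length = 0 then ((lyapunov w.length (height w)).toNat : ℝ≥0∞) else ⊤

lemma timeBound_of_balanced (hw : height w w.length = 0) :
    timeBound w = ((lyapunov w.length (height w)).toNat : ℝ≥0∞) :=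
  if_pos hw

lemma timeBound_flip {i : ℕ} (hw : height w w.length = 0) (hi : i + 1 < w.length) :
    timeBound (flip w i) = ((lyapunov w.length (reflectAt (height w) i)).toNat : ℝ≥0∞) := by
  have hflip : height (flip w i) (flip w i).length = 0 := by
    rw [length_flip, height_flip hi, reflectAt_of_ne _ hi.ne', hw]
  rw [timeBound_of_balanced hflip, length_flip, height_flip hi]

lemma three_le_length (hw : height w w.length = 0) (hm : mismatches w ≠ 0) : 3 ≤ w.length :=
  (isBridge_height hw).three_le_of_pathMismatches_ne_zero (mismatches_eq w ▸ hm)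

lemma allowedFlips_nonempty (hw : height w w.length = 0) (hm : mismatches w ≠ 0) :
    (allowedFlips w).Nonempty := by
  rw [allowedFlips_eq (three_le_length hw hm)]
  exact (isBridge_height hw).exists_active (mismatches_eq w ▸ hm)

lemma sum_timeBound_flip_add_card_le (hw : height w w.length = 0) (hm : mismatches w ≠ 0) :
    ∑ i ∈ allowedFlips w, timeBound (flip w i) + #(allowedFlips w) ≤
      #(allowedFlips w) * timeBound w := by
  have hdrift := (isBridge_height hw).sum_lyapunov_reflectAt_le
  rw [← allowedFlips_eq (three_le_length hw hm)] at hdrift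
  have hnat : ∑ i ∈ allowedFlips w, (lyapunov w.length (reflectAt (height w) i)).toNat +
      #(allowedFlips w) ≤ #(allowedFlips w) * (lyapunov w.length (height w)).toNat := by
    zify
    simpa only [Int.toNat_of_nonneg (lyapunov_nonneg _ _), sum_add_distrib, sum_const,
      nsmul_eq_mul, mul_one] using hdrift
  rw [sum_congr rfl fun i hi => timeBound_flip hw (mem_filter.1 hi).2.1.1,
    timeBound_of_balanced hw]
  exact_mod_cast hnat

lemma tsum_coolStep_mul_timeBound_le (v : Word) :
    ∑' u, coolStep v u * timeBound u + {u | mismatches u ≠ 0}.indicator 1 v ≤ timeBound v := by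
  by_cases hv : height v v.length = 0
  swap
  · exact le_top.trans_eq (if_neg hv).symm
  by_cases hm : mismatches v = 0
  · have hv' : v ∉ {u | mismatches u ≠ 0} := not_not.2 hm
    rw [coolStep, dif_neg fun h => h.1 hm, tsum_pure_mul, Set.indicator_of_notMem hv', add_zero]
  have hne := allowedFlips_nonempty hv hm
  have hcard : (#(allowedFlips v) : ℝ≥0∞) ≠ 0 := mod_cast hne.card_pos.ne'
  have htop := ENNReal.natCast_ne_top #(allowedFlips v)
  rw [coolStep, dif_pos ⟨hm, hne⟩, tsum_map_uniformOfFinset_mul, Set.indicator_of_mem hm,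
    Pi.one_apply, ← ENNReal.inv_mul_cancel hcard htop, ← mul_add,
    ENNReal.inv_mul_le_iff hcard htop]
  exact sum_timeBound_flip_add_card_le hv hm

lemma expConvTime_le_timeBound (w : Word) : expConvTime w ≤ timeBound w :=
  (tsum_toOuterMeasure_le_of_drift (fun _ => rfl) tsum_coolStep_mul_timeBound_le).trans_eq
    (tsum_pure_mul w timeBound)

lemma expConvTime_le (hw : height w w.length = 0) :
    expConvTime w ≤ ENNReal.ofReal
      (4 * w.length * ∑ x ∈ range w.length, |(height w x : ℝ)| + 9 * w.length ^ 2) := by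
  refine (expConvTime_le_timeBound w).trans ?_
  rw [timeBound_of_balanced hw, ← ENNReal.ofReal_natCast]
  refine ENNReal.ofReal_le_ofReal ?_
  rw [← Int.cast_natCast (R := ℝ), Int.toNat_of_nonneg (lyapunov_nonneg _ _)]
  exact_mod_cast (isWalk_height w).lyapunov_le

end ConvergenceTime

/-! ### Averaging over balanced words -/

section Balanced

variable {ι : Type*} [Fintype ι] {i j k : ι}

/-- The families of letters in which both letters occur equally often. -/
noncomputable def balanced (ι : Type*) [Fintype ι] : Finset (ι → Bool) :=
  {f | ∑ i, sign (f i) = 0}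

lemma sum_sign_mul_sign_eq (hj : j ≠ i) (hk : k ≠ i) :
    ∑ f ∈ balanced ι, sign (f i) * sign (f j) = ∑ f ∈ balanced ι, sign (f i) * sign (f k) := by
  refine sum_equiv ((Equiv.swap j k).arrowCongr (Equiv.refl Bool)) (fun f => ?_) fun f _ => ?_
  · simp only [balanced, mem_filter_univ, Equiv.arrowCongr_apply, Equiv.coe_refl,
      Function.comp_apply, id, Equiv.symm_swap]
    rw [Equiv.sum_comp (Equiv.swap j k) fun x => sign (f x)]
  · simp [Equiv.swap_apply_of_ne_of_ne hj.symm hk.symm]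

lemma sum_sign_mul_sign_nonpos (hj : j ≠ i) : ∑ f ∈ balanced ι, sign (f i) * sign (f j) ≤ 0 := by
  have hzero : ∑ k, ∑ f ∈ balanced ι, sign (f i) * sign (f k) = 0 := by
    rw [sum_comm]
    exact sum_eq_zero fun f hf => by rw [← mul_sum, (mem_filter.1 hf).2, mul_zero]
  rw [← add_sum_erase _ _ (mem_univ i),
    sum_congr rfl fun k hk => sum_sign_mul_sign_eq (ne_of_mem_erase hk) hj, sum_const,
    nsmul_eq_mul] at hzero
  have hdiagonal : 0 ≤ ∑ f ∈ balanced ι, sign (f i) * sign (f i) :=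
    sum_nonneg fun f _ => mul_self_nonneg _
  have hcard : (0 : ℤ) < #(univ.erase i) :=
    mod_cast card_pos.2 ⟨j, mem_erase.2 ⟨hj, mem_univ j⟩⟩
  exact nonpos_of_mul_nonpos_right (by linarith) hcard

lemma sum_sq_sum_sign_le (s : Finset ι) :
    ∑ f ∈ balanced ι, (∑ i ∈ s, sign (f i)) ^ 2 ≤ #s * #(balanced ι) := by
  calc ∑ f ∈ balanced ι, (∑ i ∈ s, sign (f i)) ^ 2
      = ∑ i ∈ s, ∑ j ∈ s, ∑ f ∈ balanced ι, sign (f i) * sign (f j) := by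
        simp only [sq, sum_mul_sum]
        rw [sum_comm]
        exact sum_congr rfl fun i _ => sum_comm
    _ ≤ ∑ i ∈ s, ∑ f ∈ balanced ι, sign (f i) * sign (f i) := by
        refine sum_le_sum fun i hi => ?_
        rw [← add_sum_erase _ _ hi, add_le_iff_nonpos_right]
        exact sum_nonpos fun j hj => sum_sign_mul_sign_nonpos (ne_of_mem_erase hj)
    _ = #s * #(balanced ι) := by simp [sign_mul_self]

end Balanced

section Average

variable {n : ℕ} {w : Word}

lemma height_ofFn {m : ℕ} (f : Fin m → Bool) (x : ℕ) :
    height (List.ofFn f) x = ∑ i ∈ {i : Fin m | (i : ℕ) < x}, sign (f i) := by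
  induction x with
  | zero => simp [height_zero]
  | succ x ih =>
    rw [height_succ, ih]
    by_cases hx : x < m
    · have hinsert : ({i : Fin m | (i : ℕ) < x + 1} : Finset (Fin m)) =
          insert ⟨x, hx⟩ ({i : Fin m | (i : ℕ) < x} : Finset (Fin m)) := by
        ext i
        simp only [mem_filter_univ, mem_insert, Fin.ext_iff]
        omega
      rw [hinsert, sum_insert (by simp), add_comm, List.getElem?_ofFn, dif_pos hx,
        Option.elim_some]
    · rw [List.getElem?_ofFn, dif_neg hx, Option.elim_none, add_zero]
      refine sum_congr (filter_congr fun i _ => ?_) fun _ _ => rfl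
      omega

lemma configSet_eq_image (n : ℕ) : configSet n = (balanced (Fin (2 * n))).image List.ofFn := by
  rw [configSet, filter_image]
  congr 1
  ext f
  have hlength := height_length (List.ofFn f)
  rw [height_ofFn, List.length_ofFn, filter_true_of_mem fun i _ => i.2] at hlength
  simp only [balanced, mem_filter, mem_univ, true_and, hlength]
  omega

lemma length_of_mem_configSet (hw : w ∈ configSet n) : w.length = 2 * n := by
  rw [configSet_eq_image] at hw
  obtain ⟨f, -, rfl⟩ := mem_image.1 hw
  exact List.length_ofFn

lemma height_length_of_mem_configSet (hw : w ∈ configSet n) : height w w.length = 0 := by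
  rw [height_length, length_of_mem_configSet hw, (mem_filter.1 hw).2]
  push_cast
  ring

lemma sum_sq_height_le (n x : ℕ) :
    ∑ w ∈ configSet n, height w x ^ 2 ≤ 2 * n * #(configSet n) := by
  rw [configSet_eq_image, sum_image List.ofFn_injective.injOn,
    card_image_of_injective _ List.ofFn_injective]
  simp only [height_ofFn]
  refine (sum_sq_sum_sign_le _).trans (mul_le_mul_of_nonneg_right ?_ (by positivity))
  rw [Fin.card_filter_val_lt]
  exact_mod_cast min_le_left _ _

lemma sum_abs_height_le (n x : ℕ) :
    ∑ w ∈ configSet n, |(height w x : ℝ)| ≤ √(2 * n) * #(configSet n) := by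
  have hsq : ∑ w ∈ configSet n, (height w x : ℝ) ^ 2 ≤ 2 * n * #(configSet n) :=
    mod_cast sum_sq_height_le n x
  refine le_of_sq_le_sq ?_ (by positivity)
  calc (∑ w ∈ configSet n, |(height w x : ℝ)|) ^ 2
      ≤ #(configSet n) * ∑ w ∈ configSet n, |(height w x : ℝ)| ^ 2 := sq_sum_le_card_mul_sum_sq
    _ ≤ #(configSet n) * (2 * n * #(configSet n)) := by
        simp only [sq_abs]
        gcongr
    _ = (√(2 * n) * #(configSet n)) ^ 2 := by
        rw [mul_pow, Real.sq_sqrt (by positivity)]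
        ring

lemma sum_expConvTime_le (n : ℕ) :
    ∑ w ∈ configSet n, expConvTime w ≤
      ENNReal.ofReal ((16 * n ^ 2 * √(2 * n) + 36 * n ^ 2) * #(configSet n)) := by
  calc ∑ w ∈ configSet n, expConvTime w
      ≤ ∑ w ∈ configSet n, ENNReal.ofReal
          (8 * n * ∑ x ∈ range (2 * n), |(height w x : ℝ)| + 36 * n ^ 2) := by
        refine sum_le_sum fun w hw => ?_
        refine (expConvTime_le (height_length_of_mem_configSet hw)).trans_eq ?_
        rw [length_of_mem_configSet hw]
        push_cast
        ring_nf
    _ = ENNReal.ofReal (8 * n * ∑ x ∈ range (2 * n), ∑ w ∈ configSet n, |(height w x : ℝ)| +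
          #(configSet n) * (36 * n ^ 2)) := by
        rw [← ENNReal.ofReal_sum_of_nonneg fun w _ => by positivity, sum_add_distrib, ← mul_sum,
          sum_comm, sum_const, nsmul_eq_mul]
    _ ≤ ENNReal.ofReal (8 * n * ∑ _x ∈ range (2 * n), √(2 * n) * #(configSet n) +
          #(configSet n) * (36 * n ^ 2)) := by
        gcongr
        exact sum_abs_height_le n _
    _ = ENNReal.ofReal ((16 * n ^ 2 * √(2 * n) + 36 * n ^ 2) * #(configSet n)) := by
        rw [sum_const, card_range, nsmul_eq_mul]
        push_cast
        ring_nf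

lemma rpow_five_halves {x : ℝ} (hx : 0 ≤ x) : x ^ ((5 : ℝ) / 2) = x ^ 2 * √x := by
  rw [show (5 : ℝ) / 2 = (2 : ℕ) + 1 / 2 by norm_num,
    Real.rpow_add_of_nonneg hx (by positivity) (by norm_num), Real.rpow_natCast, Real.sqrt_eq_rpow]

lemma sq_mul_sqrt_add_sq_le_rpow (n : ℕ) :
    16 * (n : ℝ) ^ 2 * √(2 * n) + 36 * n ^ 2 ≤ 68 * (n : ℝ) ^ ((5 : ℝ) / 2) := by
  rw [rpow_five_halves n.cast_nonneg]
  have hsq : (n : ℝ) ^ 2 ≤ n ^ 2 * √n := by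
    rcases n.eq_zero_or_pos with rfl | hn
    · simp
    · exact le_mul_of_one_le_right (by positivity) (Real.one_le_sqrt.2 (mod_cast hn))
  have hsqrt : √(2 * n) ≤ 2 * √(n : ℝ) := by
    rw [Real.sqrt_le_left (by positivity), mul_pow, Real.sq_sqrt n.cast_nonneg]
    linarith [n.cast_nonneg (α := ℝ)]
  linarith [mul_le_mul_of_nonneg_left hsqrt (sq_nonneg (n : ℝ))]

lemma one_le_two_mul_log (hn : 2 ≤ n) : 1 ≤ 2 * Real.log n := by
  have hlog : Real.log 2 ≤ Real.log n := Real.log_le_log two_pos (mod_cast hn)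
  linarith [Real.log_two_gt_d9]

end Average

end

theorem uniform_average_convergence_time_general :
    ∃ C : ℝ, 0 < C ∧ ∀ n : ℕ,
      (∑ w ∈ configSet n, expConvTime w) / ((configSet n).card : ℝ≥0∞)
        ≤ ENNReal.ofReal (C * (n : ℝ) ^ ((5 : ℝ) / 2)) := by
  refine ⟨68, by norm_num, fun n => ENNReal.div_le_of_le_mul ?_⟩
  calc ∑ w ∈ configSet n, expConvTime w
      ≤ ENNReal.ofReal ((16 * n ^ 2 * √(2 * n) + 36 * n ^ 2) * (configSet n).card) :=
        sum_expConvTime_le n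
    _ = ENNReal.ofReal (16 * n ^ 2 * √(2 * n) + 36 * n ^ 2) * (configSet n).card := by
        rw [ENNReal.ofReal_mul (by positivity), ENNReal.ofReal_natCast]
    _ ≤ ENNReal.ofReal (68 * (n : ℝ) ^ ((5 : ℝ) / 2)) * (configSet n).card := by
        gcongr
        exact sq_mul_sqrt_add_sq_le_rpow n

/-- the uniformly-averaged expected convergence time of the cooling
process is `O(n^{5/2} ln n)`. -/
theorem uniform_average_convergence_time :
    ∃ C : ℝ, 0 < C ∧ ∀ n : ℕ, 2 ≤ n →
      (∑ w ∈ configSet n, expConvTime w) / ((configSet n).card : ℝ≥0∞)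
        ≤ ENNReal.ofReal (C * (n : ℝ) ^ ((5 : ℝ) / 2) * Real.log n) := by
  obtain ⟨C, hC, h⟩ := uniform_average_convergence_time_general
  refine ⟨C * 2, by positivity, fun n hn => (h n).trans (ENNReal.ofReal_le_ofReal ?_)⟩
  rw [mul_right_comm C, mul_assoc _ 2]
  exact le_mul_of_one_le_right (by positivity) (one_le_two_mul_log hn)

end Cooling
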